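/- Let r > 0 and let X be an ℝ^d-valued random vector with finite moments of every order (E|X|^m < ∞ for all m > 0), whose law has a non-zero absolutely continuous component with respect to Lebesgue measure on ℝ^d. Let (Γ_N)_{N≥1} be a sequence of L^r-optimal quantizers of X, i.e. card(Γ_N) ≤ N and e_r(Γ_N, X) = e_{r,N}(X) for every N ≥ 1. Then for every s ∈ (r, d+r) and every r' > sd/(d+r−s), there exists a finite constant K̃_{d,r,r',s}, depending only on d, r, r' and s, such that for every N ≥ 1: e_s(Γ_N, X) ≤ K̃_{d,r,r',s} · σ_{r'}(X) · N^{−1/d}. -/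

import Mathlib

open MeasureTheory Real

noncomputable section

abbrev Euc (d : ℕ) : Type := EuclideanSpace ℝ (Fin d)

/-- L^p quantization error of a random vector `X` w.r.t. a grid `Γ`. -/
def quantErrRV (p : ℝ) {Ω : Type*} [MeasurableSpace Ω] (P : Measure Ω) {d : ℕ}
    (X : Ω → Euc d) (Γ : Finset (Euc d)) : ℝ :=
  (∫ ω, (Metric.infDist (X ω) (Γ : Set (Euc d))) ^ p ∂P) ^ (1 / p)

/-- Optimal L^p quantization error at level `N`. -/
def optQuantErrRV (p : ℝ) (N : ℕ) {Ω : Type*} [MeasurableSpace Ω] (P : Measure Ω) {d : ℕ}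
    (X : Ω → Euc d) : ℝ :=
  sInf {e | ∃ Γ : Finset (Euc d), Γ.Nonempty ∧ Γ.card ≤ N ∧ e = quantErrRV p P X Γ}

/-- `σ_p(X)`, the L^p pseudo-standard deviation. -/
def sigmaRV (p : ℝ) {Ω : Type*} [MeasurableSpace Ω] (P : Measure Ω) {d : ℕ}
    (X : Ω → Euc d) : ℝ :=
  ⨅ a : Euc d, (∫ ω, ‖X ω - a‖ ^ p ∂P) ^ (1 / p)

/-- The `L^p` distortion of the grid `Γ` for the law `μ`. -/
def distortion (p : ℝ) {d : ℕ} (μ : Measure (Euc d)) (Γ : Finset (Euc d)) : ℝ :=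
  ∫ x, (Metric.infDist x (Γ : Set (Euc d))) ^ p ∂μ

lemma add_rpow_le_two_rpow_mul {a b p : ℝ} (ha : 0 ≤ a) (hb : 0 ≤ b) (hp : 0 ≤ p) :
    (a + b) ^ p ≤ 2 ^ p * (a ^ p + b ^ p) := by
  have h1 : (a + b) ^ p ≤ (2 * max a b) ^ p := by
    apply Real.rpow_le_rpow (by positivity) _ hp
    linarith [le_max_left a b, le_max_right a b]
  rw [Real.mul_rpow (by norm_num) (le_max_of_le_left ha)] at h1
  refine h1.trans ?_
  gcongr
  have := Real.rpow_nonneg ha p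
  have := Real.rpow_nonneg hb p
  rcases max_choice a b with h | h <;> rw [h] <;> linarith

section Moments

variable {d : ℕ} {μ : Measure (Euc d)} [IsProbabilityMeasure μ]

lemma integrable_one_add_norm_rpow
    (hmom : ∀ m : ℝ, 0 < m → Integrable (fun x : Euc d => ‖x‖ ^ m) μ) {m : ℝ} (hm : 0 < m) :
    Integrable (fun x : Euc d => (1 + ‖x‖) ^ m) μ := by
  refine Integrable.mono' (((integrable_const (1 : ℝ)).add (hmom m hm)).const_mul (2 ^ m)) ?_ ?_
  · exact (Continuous.rpow_const (by fun_prop) fun x => Or.inr hm.le).aestronglyMeasurable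
  · refine Filter.Eventually.of_forall fun x => ?_
    rw [Real.norm_of_nonneg (by positivity)]
    simpa using add_rpow_le_two_rpow_mul zero_le_one (norm_nonneg x) hm.le

lemma integral_one_add_norm_rpow_le
    (hmom : ∀ m : ℝ, 0 < m → Integrable (fun x : Euc d => ‖x‖ ^ m) μ) {m q : ℝ} (hm : 0 < m)
    (hmq : m ≤ q) (hq : ∫ x, ‖x‖ ^ q ∂μ ≤ 1) :
    ∫ x, (1 + ‖x‖) ^ m ∂μ ≤ 2 ^ q * 2 := by
  have hq0 : 0 < q := hm.trans_le hmq
  calc ∫ x, (1 + ‖x‖) ^ m ∂μ ≤ ∫ x, 2 ^ q * (1 + ‖x‖ ^ q) ∂μ := by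
        refine integral_mono (integrable_one_add_norm_rpow hmom hm)
          (((integrable_const (1 : ℝ)).add (hmom q hq0)).const_mul (2 ^ q)) fun x => ?_
        have h1 : (1 + ‖x‖) ^ m ≤ (1 + ‖x‖) ^ q :=
          Real.rpow_le_rpow_of_exponent_le (by linarith [norm_nonneg x]) hmq
        refine h1.trans ?_
        simpa using add_rpow_le_two_rpow_mul zero_le_one (norm_nonneg x) hq0.le
    _ = 2 ^ q * (1 + ∫ x, ‖x‖ ^ q ∂μ) := by
        rw [integral_const_mul, integral_add (integrable_const _) (hmom q hq0)]
        simp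
    _ ≤ 2 ^ q * 2 := by gcongr; linarith

lemma integrable_infDist_rpow
    (hmom : ∀ m : ℝ, 0 < m → Integrable (fun x : Euc d => ‖x‖ ^ m) μ) {p : ℝ} (hp : 0 < p)
    (s : Set (Euc d)) : Integrable (fun x => Metric.infDist x s ^ p) μ := by
  rcases s.eq_empty_or_nonempty with rfl | ⟨a, ha⟩
  · simp [Real.zero_rpow hp.ne']
  refine Integrable.mono'
    (((hmom p hp).add (integrable_const (‖a‖ ^ p))).const_mul (2 ^ p)) ?_ ?_
  · exact ((Metric.continuous_infDist_pt s).rpow_const fun x => Or.inr hp.le).aestronglyMeasurable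
  · refine Filter.Eventually.of_forall fun x => ?_
    rw [Real.norm_of_nonneg (Real.rpow_nonneg Metric.infDist_nonneg _)]
    refine le_trans ?_ (add_rpow_le_two_rpow_mul (norm_nonneg x) (norm_nonneg a) hp.le)
    refine Real.rpow_le_rpow Metric.infDist_nonneg ?_ hp.le
    refine (Metric.infDist_le_dist_of_mem ha).trans ?_
    rw [dist_eq_norm]
    exact norm_sub_le x a

/-- A grid which is at least as good as `{0}` has a point near the origin. -/
lemma norm_rpow_le_of_distortion_le
    (hmom : ∀ m : ℝ, 0 < m → Integrable (fun x : Euc d => ‖x‖ ^ m) μ) {r q : ℝ} (hr : 0 < r)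
    (hrq : r ≤ q) (hq : ∫ x, ‖x‖ ^ q ∂μ ≤ 1) {Γ : Finset (Euc d)} {a₀ : Euc d}
    (ha₀ : a₀ ∈ Γ) (hmin : ∀ a ∈ Γ, ‖a₀‖ ≤ ‖a‖)
    (hΓ : distortion r μ Γ ≤ distortion r μ {0}) :
    ‖a₀‖ ≤ (2 ^ r * (2 * (2 ^ q * 2))) ^ (1 / r) := by
  have hM : ∫ x, ‖x‖ ^ r ∂μ ≤ 2 ^ q * 2 := by
    refine le_trans (integral_mono (hmom r hr) (integrable_one_add_norm_rpow hmom hr) fun x => ?_)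
      (integral_one_add_norm_rpow_le hmom hr hrq hq)
    exact Real.rpow_le_rpow (norm_nonneg x) (by linarith) hr.le
  have h0 : distortion r μ {0} = ∫ x, ‖x‖ ^ r ∂μ := by
    simp [distortion]
  have hdist_int := integrable_infDist_rpow hmom hr (Γ : Set (Euc d))
  have key : ‖a₀‖ ^ r ≤ 2 ^ r * (2 * (2 ^ q * 2)) := by
    calc ‖a₀‖ ^ r = ∫ _x : Euc d, ‖a₀‖ ^ r ∂μ := by simp
      _ ≤ ∫ x, 2 ^ r * (Metric.infDist x (Γ : Set (Euc d)) ^ r + ‖x‖ ^ r) ∂μ := by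
        refine integral_mono (integrable_const _) ((hdist_int.add (hmom r hr)).const_mul _) fun x => ?_
        refine le_trans ?_ (add_rpow_le_two_rpow_mul Metric.infDist_nonneg (norm_nonneg x) hr.le)
        refine Real.rpow_le_rpow (norm_nonneg _) ?_ hr.le
        rw [← sub_le_iff_le_add, Metric.le_infDist ⟨a₀, ha₀⟩]
        intro y hy
        have := hmin y hy
        rw [dist_comm, dist_eq_norm]
        linarith [norm_sub_norm_le y x]
      _ = 2 ^ r * (distortion r μ Γ + ∫ x, ‖x‖ ^ r ∂μ) := by
        rw [integral_const_mul, integral_add hdist_int (hmom r hr), distortion]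
      _ ≤ _ := by gcongr; linarith
  rw [one_div]
  rwa [Real.le_rpow_inv_iff_of_pos (norm_nonneg _) (by positivity) hr]

end Moments

/-- A nonnegative antitone sequence with `u N ^ (1 + β) ≤ C * (u N - u (N + 1))` decays like
`N ^ (-1 / β)`. -/
lemma rpow_recursion_decay {u : ℕ → ℝ} {β C M : ℝ} (hβ : 0 < β) (hC : 0 < C) (hM : 0 < M)
    (hu : ∀ N, 1 ≤ N → 0 ≤ u N) (hu1 : u 1 ≤ M)
    (hrec : ∀ N, 1 ≤ N → u N ^ (1 + β) ≤ C * (u N - u (N + 1))) (N : ℕ) (hN : 1 ≤ N) :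
    u N ^ β ≤ max (M ^ β) (C / β) / N := by
  set L := max (M ^ β) (C / β) with hL
  have hL0 : 0 < L := lt_max_of_lt_right (by positivity)
  induction N, hN using Nat.le_induction with
  | base =>
    rw [Nat.cast_one, div_one]
    exact (Real.rpow_le_rpow (hu 1 le_rfl) hu1 hβ.le).trans (le_max_left _ _)
  | succ N hN ih =>
    have hNpos : (0 : ℝ) < N := by exact_mod_cast hN
    have hv := hu (N + 1) (by omega)
    rcases hv.eq_or_lt with h0 | hvpos
    · rw [← h0, Real.zero_rpow hβ.ne']
      positivity
    have hr := hrec N hN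
    have hle : u (N + 1) ≤ u N := by
      have := Real.rpow_nonneg (hu N hN) (1 + β)
      nlinarith
    have hupos : 0 < u N := hvpos.trans_le hle
    set t := u N ^ β / C with ht
    have ht0 : 0 < t := by positivity
    have h1 : u (N + 1) ≤ u N * (1 - t) := by
      rw [Real.rpow_add hupos, Real.rpow_one] at hr
      have : u N * t ≤ u N - u (N + 1) := by
        rw [ht, ← mul_div_assoc, div_le_iff₀ hC]; linarith
      linarith
    have h2 : u (N + 1) ≤ u N * Real.exp (-t) := by
      refine h1.trans ?_
      gcongr
      linarith [Real.add_one_le_exp (-t)]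
    have h3 : u (N + 1) ^ β * Real.exp (t * β) ≤ u N ^ β := by
      have := Real.rpow_le_rpow hv h2 hβ.le
      rw [Real.mul_rpow hupos.le (Real.exp_pos _).le, ← Real.exp_mul, neg_mul, Real.exp_neg,
        ← div_eq_mul_inv, le_div_iff₀ (Real.exp_pos _)] at this
      exact this
    have h4 : u (N + 1) ^ β * (1 + t * β) ≤ u N ^ β := by
      refine le_trans ?_ h3
      gcongr
      linarith [Real.add_one_le_exp (t * β)]
    have hy : 0 < u (N + 1) ^ β := by positivity
    set x := u N ^ β with hx
    have hxpos : 0 < x := by positivity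
    have hCβ : C ≤ L * β := (div_le_iff₀ hβ).1 (le_max_right _ _)
    rw [le_div_iff₀ hNpos] at ih
    have h5 : u (N + 1) ^ β ≤ x / (1 + t * β) := (le_div_iff₀ (by positivity)).2 h4
    refine h5.trans ?_
    rw [div_le_div_iff₀ (by positivity) (by positivity)]
    have h6 : x ≤ L * (t * β) := by
      have : C * t = x := by rw [ht]; field_simp
      nlinarith
    push_cast
    nlinarith

lemma infDist_insert_le_min {d : ℕ} (Γ : Finset (Euc d)) (hΓ : Γ.Nonempty) (x y : Euc d) :
    Metric.infDist x (↑(insert y Γ) : Set (Euc d)) ≤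
      min (Metric.infDist x (Γ : Set (Euc d))) (dist x y) := by
  refine le_min (Metric.infDist_le_infDist_of_subset ?_ hΓ) (Metric.infDist_le_dist_of_mem ?_)
  · exact_mod_cast Finset.subset_insert y Γ
  · simp

/-- Lower bound for the average gain, for the weight `(1 + ‖y‖) ^ (-q)`, of adding a point `y`. -/
lemma ofReal_le_lintegral_gain {d : ℕ} {q r R : ℝ} (hr : 0 < r) (hR : 0 ≤ R) (hq : 0 < q)
    {Γ : Finset (Euc d)} {a₀ : Euc d} (ha₀ : a₀ ∈ Γ) (hR₀ : ‖a₀‖ ≤ R) (x : Euc d) :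
    ENNReal.ofReal ((2 + R) ^ (-q) * (1 - 2⁻¹ ^ r) * 2⁻¹ ^ d *
        (volume (Metric.ball (0 : Euc d) 1)).toReal *
        (Metric.infDist x (Γ : Set (Euc d)) ^ (r + d) * (1 + ‖x‖) ^ (-q))) ≤
      ∫⁻ y, ENNReal.ofReal ((1 + ‖y‖) ^ (-q)) *
        ENNReal.ofReal (Metric.infDist x (Γ : Set (Euc d)) ^ r -
          min (Metric.infDist x (Γ : Set (Euc d))) (dist x y) ^ r) := by
  set D := Metric.infDist x (Γ : Set (Euc d)) with hD
  have hD0 : 0 ≤ D := Metric.infDist_nonneg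
  have hDle : D ≤ ‖x‖ + R := by
    refine (Metric.infDist_le_dist_of_mem (s := (Γ : Set (Euc d))) ha₀).trans ?_
    rw [dist_eq_norm]
    exact (norm_sub_le x a₀).trans (by linarith)
  have h2r : (2⁻¹ : ℝ) ^ r ≤ 1 := Real.rpow_le_one (by norm_num) (by norm_num) hr.le
  have hball : ENNReal.ofReal ((D / 2) ^ d * (volume (Metric.ball (0 : Euc d) 1)).toReal) =
      volume (Metric.closedBall x (D / 2)) := by
    rw [Measure.addHaar_closedBall _ _ (by positivity), finrank_euclideanSpace_fin,
      ENNReal.ofReal_mul (by positivity), ENNReal.ofReal_toReal measure_ball_lt_top.ne]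
  have hpt : ∀ y ∈ Metric.closedBall x (D / 2),
      ENNReal.ofReal ((2 + R) ^ (-q) * (1 + ‖x‖) ^ (-q) * ((1 - 2⁻¹ ^ r) * D ^ r)) ≤
      ENNReal.ofReal ((1 + ‖y‖) ^ (-q)) * ENNReal.ofReal (D ^ r - min D (dist x y) ^ r) := by
    intro y hy
    rw [Metric.mem_closedBall, dist_comm] at hy
    rw [← ENNReal.ofReal_mul (by positivity)]
    apply ENNReal.ofReal_le_ofReal
    have h1 : (2 + R) ^ (-q) * (1 + ‖x‖) ^ (-q) ≤ (1 + ‖y‖) ^ (-q) := by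
      rw [← Real.mul_rpow (by positivity) (by positivity)]
      refine Real.rpow_le_rpow_of_nonpos (by positivity) ?_ (by linarith)
      have : ‖y‖ ≤ ‖x‖ + dist x y := by
        rw [dist_comm, dist_eq_norm]
        linarith [norm_sub_norm_le y x]
      nlinarith [norm_nonneg x]
    have h2 : (1 - 2⁻¹ ^ r) * D ^ r ≤ D ^ r - min D (dist x y) ^ r := by
      have : min D (dist x y) ^ r ≤ (2⁻¹ * D) ^ r := by
        refine Real.rpow_le_rpow (le_min hD0 dist_nonneg) ?_ hr.le
        exact (min_le_right _ _).trans (by linarith)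
      rw [Real.mul_rpow (by norm_num) hD0] at this
      linarith
    have : 0 ≤ (1 - 2⁻¹ ^ r) * D ^ r := mul_nonneg (by linarith) (by positivity)
    gcongr
  calc _ = ENNReal.ofReal ((2 + R) ^ (-q) * (1 + ‖x‖) ^ (-q) * ((1 - 2⁻¹ ^ r) * D ^ r)) *
        volume (Metric.closedBall x (D / 2)) := by
        rw [← hball, ← ENNReal.ofReal_mul
          (mul_nonneg (by positivity) (mul_nonneg (by linarith) (by positivity))),
          Real.rpow_add_of_nonneg hD0 hr.le (Nat.cast_nonneg d), Real.rpow_natCast, div_eq_mul_inv,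
          mul_pow]
        congr 1
        ring
    _ = ∫⁻ _y in Metric.closedBall x (D / 2),
        ENNReal.ofReal ((2 + R) ^ (-q) * (1 + ‖x‖) ^ (-q) * ((1 - 2⁻¹ ^ r) * D ^ r)) := by
        rw [setLIntegral_const]
    _ ≤ ∫⁻ y in Metric.closedBall x (D / 2), ENNReal.ofReal ((1 + ‖y‖) ^ (-q)) *
          ENNReal.ofReal (D ^ r - min D (dist x y) ^ r) :=
        setLIntegral_mono' Metric.isClosed_closedBall.measurableSet hpt
    _ ≤ _ := setLIntegral_le_lintegral _ _

lemma integral_infDist_rpow_mul_le_gain (d : ℕ) {q r R : ℝ} (hr : 0 < r) (hR : 0 ≤ R)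
    (hq : (d : ℝ) < q) :
    ∃ C : ℝ, 0 < C ∧ ∀ μ : Measure (Euc d), IsProbabilityMeasure μ →
      (∀ m : ℝ, 0 < m → Integrable (fun x : Euc d => ‖x‖ ^ m) μ) →
      ∀ (Γ : Finset (Euc d)) (a₀ : Euc d) (T : ℝ), a₀ ∈ Γ → ‖a₀‖ ≤ R →
        (∀ y, T ≤ distortion r μ (insert y Γ)) →
        ∫ x, Metric.infDist x (Γ : Set (Euc d)) ^ (r + d) * (1 + ‖x‖) ^ (-q) ∂μ ≤
          C * (distortion r μ Γ - T) := by
  have hq0 : 0 < q := (Nat.cast_nonneg d).trans_lt hq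
  set v := (volume (Metric.ball (0 : Euc d) 1)).toReal with hv
  have hvpos : 0 < v :=
    ENNReal.toReal_pos (Metric.measure_ball_pos _ _ one_pos).ne' measure_ball_lt_top.ne
  have h2r : (2⁻¹ : ℝ) ^ r < 1 := Real.rpow_lt_one (by norm_num) (by norm_num) hr
  set c := (2 + R) ^ (-q) * (1 - 2⁻¹ ^ r) * 2⁻¹ ^ d * v with hc
  have hcpos : 0 < c := by
    have : 0 < 1 - (2⁻¹ : ℝ) ^ r := by linarith
    positivity
  have hgint : Integrable (fun y : Euc d => (1 + ‖y‖) ^ (-q)) volume :=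
    integrable_one_add_norm (by simpa using hq)
  set G := ∫ y : Euc d, (1 + ‖y‖) ^ (-q) with hG
  have hG0 : 0 ≤ G := integral_nonneg fun y => by positivity
  refine ⟨(G + 1) / c, by positivity, ?_⟩
  intro μ _ hmom Γ a₀ T ha₀ hR₀ hT
  have hne : Γ.Nonempty := ⟨a₀, ha₀⟩
  have hdist_int := integrable_infDist_rpow hmom hr (Γ : Set (Euc d))
  have hminint : ∀ y, Integrable
      (fun x => min (Metric.infDist x (Γ : Set (Euc d))) (dist x y) ^ r) μ := fun y => by
    refine hdist_int.mono' ?_ (Filter.Eventually.of_forall fun x => ?_)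
    · exact (((Metric.continuous_infDist_pt _).min (by fun_prop)).rpow_const
        fun x => Or.inr hr.le).aestronglyMeasurable
    · have h0 : 0 ≤ min (Metric.infDist x (Γ : Set (Euc d))) (dist x y) :=
        le_min Metric.infDist_nonneg dist_nonneg
      rw [Real.norm_of_nonneg (Real.rpow_nonneg h0 _)]
      exact Real.rpow_le_rpow h0 (min_le_left _ _) hr.le
  have hgain : ∀ y, ∫⁻ x, ENNReal.ofReal (Metric.infDist x (Γ : Set (Euc d)) ^ r -
      min (Metric.infDist x (Γ : Set (Euc d))) (dist x y) ^ r) ∂μ ≤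
      ENNReal.ofReal (distortion r μ Γ - T) := fun y => by
    have hsub : Integrable (fun x => Metric.infDist x (Γ : Set (Euc d)) ^ r -
        min (Metric.infDist x (Γ : Set (Euc d))) (dist x y) ^ r) μ := hdist_int.sub (hminint y)
    rw [← ofReal_integral_eq_lintegral_ofReal hsub]
    · apply ENNReal.ofReal_le_ofReal
      rw [integral_sub hdist_int (hminint y)]
      have h1 : distortion r μ (insert y Γ) ≤
          ∫ x, min (Metric.infDist x (Γ : Set (Euc d))) (dist x y) ^ r ∂μ :=
        integral_mono (integrable_infDist_rpow hmom hr _) (hminint y) fun x =>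
          Real.rpow_le_rpow Metric.infDist_nonneg (infDist_insert_le_min Γ hne x y) hr.le
      have := hT y
      change distortion r μ Γ - _ ≤ _
      linarith
    · refine Filter.Eventually.of_forall fun x => ?_
      exact sub_nonneg.2 (Real.rpow_le_rpow (le_min Metric.infDist_nonneg dist_nonneg)
        (min_le_left _ _) hr.le)
  have hΔ : 0 ≤ distortion r μ Γ - T := by
    have := hT a₀
    rw [Finset.insert_eq_of_mem ha₀] at this
    linarith
  have hmeas : Measurable (Function.uncurry fun x y : Euc d => ENNReal.ofReal ((1 + ‖y‖) ^ (-q)) *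
      ENNReal.ofReal (Metric.infDist x (Γ : Set (Euc d)) ^ r -
        min (Metric.infDist x (Γ : Set (Euc d))) (dist x y) ^ r)) := by
    have hcont : Continuous fun z : Euc d × Euc d => Metric.infDist z.1 (Γ : Set (Euc d)) :=
      (Metric.continuous_infDist_pt _).comp continuous_fst
    refine Measurable.fun_mul ?_ ?_
    · exact (by fun_prop : Measurable fun z : Euc d × Euc d =>
        ENNReal.ofReal ((1 + ‖z.2‖) ^ (-q)))
    · refine ENNReal.measurable_ofReal.comp (Continuous.measurable ?_)
      refine (hcont.rpow_const fun x => Or.inr hr.le).sub ?_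
      exact (hcont.min continuous_dist).rpow_const fun x => Or.inr hr.le
  have hmain : ∫⁻ x, ENNReal.ofReal
      (c * (Metric.infDist x (Γ : Set (Euc d)) ^ (r + d) * (1 + ‖x‖) ^ (-q))) ∂μ ≤
      ENNReal.ofReal (G * (distortion r μ Γ - T)) := by
    calc _ ≤ ∫⁻ x, ∫⁻ y, ENNReal.ofReal ((1 + ‖y‖) ^ (-q)) *
          ENNReal.ofReal (Metric.infDist x (Γ : Set (Euc d)) ^ r -
            min (Metric.infDist x (Γ : Set (Euc d))) (dist x y) ^ r) ∂volume ∂μ :=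
          lintegral_mono fun x => ofReal_le_lintegral_gain hr hR hq0 ha₀ hR₀ x
      _ = ∫⁻ y, ∫⁻ x, ENNReal.ofReal ((1 + ‖y‖) ^ (-q)) *
          ENNReal.ofReal (Metric.infDist x (Γ : Set (Euc d)) ^ r -
            min (Metric.infDist x (Γ : Set (Euc d))) (dist x y) ^ r) ∂μ :=
          lintegral_lintegral_swap hmeas.aemeasurable
      _ ≤ ∫⁻ y : Euc d, ENNReal.ofReal ((1 + ‖y‖) ^ (-q)) *
            ENNReal.ofReal (distortion r μ Γ - T) := by
          refine lintegral_mono fun y => ?_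
          rw [lintegral_const_mul' _ _ ENNReal.ofReal_ne_top]
          gcongr
          exact hgain y
      _ = ENNReal.ofReal (G * (distortion r μ Γ - T)) := by
          rw [lintegral_mul_const' _ _ ENNReal.ofReal_ne_top, ENNReal.ofReal_mul hG0, hG,
            ofReal_integral_eq_lintegral_ofReal hgint
              (Filter.Eventually.of_forall fun y => by positivity)]
  have hfin : c * ∫ x, Metric.infDist x (Γ : Set (Euc d)) ^ (r + d) * (1 + ‖x‖) ^ (-q) ∂μ ≤
      G * (distortion r μ Γ - T) := by
    rw [← integral_const_mul, integral_eq_lintegral_of_nonneg_ae]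
    · exact ENNReal.toReal_le_of_le_ofReal (mul_nonneg hG0 hΔ) hmain
    · refine Filter.Eventually.of_forall fun x => ?_
      have := Metric.infDist_nonneg (x := x) (s := (Γ : Set (Euc d)))
      simp only [Pi.zero_apply]
      positivity
    · refine Measurable.aestronglyMeasurable ?_
      have := (Metric.continuous_infDist_pt (Γ : Set (Euc d))).measurable
      fun_prop
  rw [div_mul_eq_mul_div, le_div_iff₀ hcpos]
  nlinarith

/-- Hölder's inequality comparing `∫ f ^ p` with the weighted integral `∫ f ^ t * w⁻¹`. -/
lemma integral_rpow_le_weighted {α : Type*} [MeasurableSpace α] {μ : Measure α} {f w : α → ℝ}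
    {p t : ℝ} (hp : 0 < p) (hpt : p < t) (hf : ∀ x, 0 ≤ f x) (hw : ∀ x, 0 < w x)
    (hfm : Measurable f) (hwm : Measurable w)
    (hdist_int : Integrable (fun x => f x ^ t * (w x)⁻¹) μ)
    (hwint : Integrable (fun x => w x ^ (p / (t - p))) μ) :
    ∫ x, f x ^ p ∂μ ≤ (∫ x, f x ^ t * (w x)⁻¹ ∂μ) ^ (p / t) *
      (∫ x, w x ^ (p / (t - p)) ∂μ) ^ ((t - p) / t) := by
  have ht : 0 < t := hp.trans hpt
  have htp : 0 < t - p := by linarith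
  have hconj : (t / p).HolderConjugate (t / (t - p)) := by
    rw [Real.holderConjugate_iff]
    constructor
    · rwa [one_lt_div hp]
    · field_simp
      ring
  have hF : ∀ x, ((f x ^ t * (w x)⁻¹) ^ (p / t)) ^ (t / p) = f x ^ t * (w x)⁻¹ := fun x => by
    have := hf x
    have := (hw x).le
    rw [← Real.rpow_mul (by positivity), div_mul_div_cancel₀ ht.ne', div_self hp.ne',
      Real.rpow_one]
  have hW : ∀ x, (w x ^ (p / t)) ^ (t / (t - p)) = w x ^ (p / (t - p)) := fun x => by
    rw [← Real.rpow_mul (hw x).le, div_mul_div_cancel₀ ht.ne']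
  have hFn : ∀ x, 0 ≤ (f x ^ t * (w x)⁻¹) ^ (p / t) := fun x => by
    have := hf x
    have := (hw x).le
    positivity
  have hWn : ∀ x, 0 ≤ w x ^ (p / t) := fun x => by
    have := (hw x).le
    positivity
  have hmul : ∀ x, (f x ^ t * (w x)⁻¹) ^ (p / t) * w x ^ (p / t) = f x ^ p := fun x => by
    have h1 := hf x
    have h2 := hw x
    rw [← Real.mul_rpow (by positivity) h2.le, mul_assoc, inv_mul_cancel₀ h2.ne', mul_one,
      ← Real.rpow_mul h1, mul_div_cancel₀ _ ht.ne']
  have key := integral_mul_le_Lp_mul_Lq_of_nonneg (μ := μ) hconj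
    (f := fun x => (f x ^ t * (w x)⁻¹) ^ (p / t)) (g := fun x => w x ^ (p / t))
    (Filter.Eventually.of_forall hFn) (Filter.Eventually.of_forall hWn) ?_ ?_
  · simpa only [hF, hW, hmul, one_div_div] using key
  · rw [← integrable_norm_rpow_iff (Measurable.aestronglyMeasurable (by fun_prop))
      (by simpa using hconj.pos) ENNReal.ofReal_ne_top,
      ENNReal.toReal_ofReal hconj.nonneg]
    simpa only [Real.norm_of_nonneg (hFn _), hF] using hdist_int
  · rw [← integrable_norm_rpow_iff (Measurable.aestronglyMeasurable (by fun_prop))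
      (by simpa using hconj.symm.pos) ENNReal.ofReal_ne_top,
      ENNReal.toReal_ofReal hconj.symm.nonneg]
    simpa only [Real.norm_of_nonneg (hWn _), hW] using hwint

/-- The separation radii of a finite set are controlled by a volume packing argument. -/
lemma sum_separation_pow_le (d : ℕ) (hd : 1 ≤ d) {q : ℝ} (hq : (d : ℝ) < q) :
    ∃ C : ℝ, 0 < C ∧ ∀ (Γ : Finset (Euc d)) (a₀ : Euc d), a₀ ∈ Γ → (∀ a ∈ Γ, ‖a₀‖ ≤ ‖a‖) →
      ∑ a ∈ Γ.erase a₀, Metric.infDist a (↑(Γ.erase a) : Set (Euc d)) ^ d * (1 + ‖a‖) ^ (-q) ≤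
        C := by
  have : Nontrivial (Euc d) :=
    Module.nontrivial_of_finrank_pos (R := ℝ) (by rw [finrank_euclideanSpace_fin]; omega)
  have hq0 : 0 < q := (Nat.cast_nonneg d).trans_lt hq
  set v := volume.real (Metric.ball (0 : Euc d) 1) with hv
  have hvpos : 0 < v :=
    ENNReal.toReal_pos (Metric.measure_ball_pos _ _ one_pos).ne' measure_ball_lt_top.ne
  have hgint : Integrable (fun y : Euc d => (1 + ‖y‖) ^ (-q)) volume :=
    integrable_one_add_norm (by simpa using hq)
  set G := ∫ y : Euc d, (1 + ‖y‖) ^ (-q) with hG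
  have hG0 : 0 ≤ G := integral_nonneg fun y => by positivity
  set c : ℝ := 2 ^ (-q) * 4⁻¹ ^ d * v with hc
  have hcpos : 0 < c := by positivity
  refine ⟨(G + 1) / c, by positivity, fun Γ a₀ ha₀ hmin => ?_⟩
  set h : Euc d → ℝ := fun a => Metric.infDist a (↑(Γ.erase a) : Set (Euc d)) with hh
  have hh0 : ∀ a, 0 ≤ h a := fun a => Metric.infDist_nonneg
  have hsep : ∀ a, ∀ b ∈ Γ, b ≠ a → h a ≤ dist a b := fun a b hb hba =>
    Metric.infDist_le_dist_of_mem (by simp [hb, hba])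
  have hball : ∀ a ∈ Γ.erase a₀, c * (h a ^ d * (1 + ‖a‖) ^ (-q)) ≤
      ∫ y in Metric.ball a (h a / 4), (1 + ‖y‖) ^ (-q) := by
    intro a ha
    have ha' := Finset.mem_erase.1 ha
    have hha : h a ≤ 2 * ‖a‖ := by
      refine (hsep a a₀ ha₀ ha'.1.symm).trans ?_
      rw [dist_eq_norm]
      linarith [norm_sub_le a a₀, hmin a ha'.2]
    have hconst : ∫ _y in Metric.ball a (h a / 4), (2 ^ (-q) * (1 + ‖a‖) ^ (-q) : ℝ) =
        c * (h a ^ d * (1 + ‖a‖) ^ (-q)) := by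
      rw [setIntegral_const, Measure.real,
        Measure.addHaar_ball _ _ (by have := hh0 a; positivity), finrank_euclideanSpace_fin,
        ENNReal.toReal_mul, ENNReal.toReal_ofReal (by have := hh0 a; positivity), smul_eq_mul,
        div_eq_mul_inv, mul_pow, hc, hv, Measure.real]
      ring
    rw [← hconst]
    refine setIntegral_mono_on (integrableOn_const measure_ball_lt_top.ne)
      hgint.integrableOn Metric.isOpen_ball.measurableSet fun y hy => ?_
    rw [← Real.mul_rpow (by norm_num) (by positivity)]
    refine Real.rpow_le_rpow_of_nonpos (by positivity) ?_ (by linarith)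
    rw [Metric.mem_ball, dist_eq_norm] at hy
    linarith [norm_sub_norm_le y a, norm_nonneg a]
  have hdisj : ((Γ.erase a₀ : Finset (Euc d)) : Set (Euc d)).Pairwise
      (Function.onFun Disjoint fun a => Metric.ball a (h a / 4)) := by
    intro a ha b hb hab
    have ha' := Finset.mem_erase.1 ha
    have hb' := Finset.mem_erase.1 hb
    refine Metric.ball_disjoint_ball ?_
    have h1 := hsep a b hb'.2 hab.symm
    have h2 := hsep b a ha'.2 hab
    rw [dist_comm] at h2
    linarith [hh0 a, hh0 b]
  have hsum : c * ∑ a ∈ Γ.erase a₀, h a ^ d * (1 + ‖a‖) ^ (-q) ≤ G := by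
    rw [Finset.mul_sum]
    refine (Finset.sum_le_sum hball).trans ?_
    rw [← integral_biUnion_finset _ (fun a _ => Metric.isOpen_ball.measurableSet) hdisj
      fun a _ => hgint.integrableOn]
    exact setIntegral_le_integral hgint (Filter.Eventually.of_forall fun y => by positivity)
  rw [le_div_iff₀ hcpos]
  linarith

/-- At least half of the elements have at most twice the average. -/
lemma card_le_two_mul_card_filter {ι : Type*} (s : Finset ι) (f : ι → ℝ)
    (hf : ∀ i ∈ s, 0 ≤ f i) {C : ℝ} (hC : 0 < C) (hsum : ∑ i ∈ s, f i ≤ C) :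
    (s.card : ℝ) ≤ 2 * (s.filter fun i => f i ≤ 2 * C / s.card).card := by
  rcases s.eq_empty_or_nonempty with rfl | hs
  · simp
  have hn : (0 : ℝ) < s.card := by exact_mod_cast hs.card_pos
  have hcard := Finset.card_filter_add_card_filter_not (s := s) fun i => f i ≤ 2 * C / s.card
  have h1 : ((s.filter fun i => ¬ f i ≤ 2 * C / s.card).card : ℝ) * (2 * C / s.card) ≤ C := by
    rw [← nsmul_eq_mul]
    refine le_trans (Finset.card_nsmul_le_sum _ f _ fun i hi => ?_)
      ((Finset.sum_le_sum_of_subset_of_nonneg (Finset.filter_subset _ _)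
        fun i hi _ => hf i hi).trans hsum)
    exact (not_le.1 (Finset.mem_filter.1 hi).2).le
  rw [← mul_div_assoc, div_le_iff₀ hn] at h1
  have h2 : ((s.filter fun i => ¬ f i ≤ 2 * C / s.card).card : ℝ) * 2 ≤ s.card := by
    nlinarith
  have h3 : ((s.filter fun i => f i ≤ 2 * C / s.card).card : ℝ) +
      (s.filter fun i => ¬ f i ≤ 2 * C / s.card).card = s.card := by exact_mod_cast hcard
  linarith

lemma sum_infDist_erase_sub_le {d : ℕ} {r : ℝ} {Γ S : Finset (Euc d)} {a₀ : Euc d} (hr : 0 < r)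
    (ha₀ : a₀ ∈ Γ) {B : Euc d → ℝ}
    (hB : ∀ a ∈ Γ, 0 ≤ B a)
    (hSB : ∀ a ∈ S, Metric.infDist a (↑(Γ.erase a) : Set (Euc d)) ^ r ≤ B a) (x : Euc d) :
    ∃ b ∈ Γ, ‖b‖ ≤ 2 * ‖x‖ + ‖a₀‖ ∧
      ∑ a ∈ S, (Metric.infDist x (↑(Γ.erase a) : Set (Euc d)) ^ r -
        Metric.infDist x (Γ : Set (Euc d)) ^ r) ≤
      2 ^ r * (Metric.infDist x (Γ : Set (Euc d)) ^ r + B b) := by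
  obtain ⟨b, hb, hxb⟩ := Γ.finite_toSet.isCompact.exists_infDist_eq_dist ⟨a₀, ha₀⟩ x
  have hb' : b ∈ Γ := hb
  have hD0 : 0 ≤ Metric.infDist x (Γ : Set (Euc d)) := Metric.infDist_nonneg
  refine ⟨b, hb', ?_, ?_⟩
  · have h1 : dist x b ≤ dist x a₀ := hxb ▸ Metric.infDist_le_dist_of_mem ha₀
    rw [dist_eq_norm, dist_eq_norm] at h1
    have h2 := norm_sub_norm_le b x
    rw [norm_sub_rev] at h2
    linarith [norm_sub_le x a₀]
  · have hzero : ∀ a ∈ S, a ≠ b → Metric.infDist x (↑(Γ.erase a) : Set (Euc d)) ^ r -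
        Metric.infDist x (Γ : Set (Euc d)) ^ r ≤ 0 := fun a _ hab => by
      rw [sub_nonpos]
      refine Real.rpow_le_rpow Metric.infDist_nonneg ?_ hr.le
      rw [hxb]
      exact Metric.infDist_le_dist_of_mem (by simp [hb', hab.symm])
    have hnn : 0 ≤ 2 ^ r * (Metric.infDist x (Γ : Set (Euc d)) ^ r + B b) := by
      have := hB b hb'
      positivity
    by_cases hbS : b ∈ S
    · rw [← Finset.add_sum_erase _ _ hbS]
      have h1 : ∑ a ∈ S.erase b, (Metric.infDist x (↑(Γ.erase a) : Set (Euc d)) ^ r -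
          Metric.infDist x (Γ : Set (Euc d)) ^ r) ≤ 0 :=
        Finset.sum_nonpos fun a ha =>
          hzero a (Finset.mem_of_mem_erase ha) (Finset.ne_of_mem_erase ha)
      have h2 : Metric.infDist x (↑(Γ.erase b) : Set (Euc d)) ≤
          Metric.infDist x (Γ : Set (Euc d)) +
            Metric.infDist b (↑(Γ.erase b) : Set (Euc d)) := by
        rw [hxb, add_comm]
        exact Metric.infDist_le_infDist_add_dist
      have h3 := (Real.rpow_le_rpow Metric.infDist_nonneg h2 hr.le).trans
        (add_rpow_le_two_rpow_mul hD0 Metric.infDist_nonneg hr.le)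
      have h4 : (2 : ℝ) ^ r * (Metric.infDist x (Γ : Set (Euc d)) ^ r +
          Metric.infDist b (↑(Γ.erase b) : Set (Euc d)) ^ r) ≤
          2 ^ r * (Metric.infDist x (Γ : Set (Euc d)) ^ r + B b) := by
        gcongr
        exact hSB b hbS
      have := Real.rpow_nonneg hD0 r
      linarith
    · exact (Finset.sum_nonpos fun a ha => hzero a ha (by rintro rfl; exact hbS ha)).trans hnn

/-- Removing a well chosen point from a grid increases the distortion only a little. -/
lemma card_mul_distortion_loss_le (d : ℕ) (hd : 1 ≤ d) {q r R M : ℝ} (hr : 0 < r) (hR : 0 ≤ R)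
    (hM : 0 ≤ M) (hq : (d : ℝ) < q) :
    ∃ C : ℝ, 0 < C ∧ ∀ μ : Measure (Euc d), IsProbabilityMeasure μ →
      (∀ m : ℝ, 0 < m → Integrable (fun x : Euc d => ‖x‖ ^ m) μ) →
      ∫ x, (1 + ‖x‖) ^ (q * (r / d)) ∂μ ≤ M →
      ∀ (N : ℕ) (Γ : Finset (Euc d)) (a₀ : Euc d) (T : ℝ), 1 ≤ N → Γ.card = N + 1 → a₀ ∈ Γ →
        (∀ a ∈ Γ, ‖a₀‖ ≤ ‖a‖) → ‖a₀‖ ≤ R →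
        (∀ a ∈ Γ, T ≤ distortion r μ (Γ.erase a)) →
        N * (T - distortion r μ Γ) ≤ C * (distortion r μ Γ + (N : ℝ) ^ (-(r / d))) := by
  obtain ⟨C, hC, hpack⟩ := sum_separation_pow_le d hd hq
  have hd0 : (0 : ℝ) < d := by exact_mod_cast hd
  have hq0 : 0 < q := hd0.trans hq
  set κ := (2 * C) ^ (r / d) * (2 + R) ^ (q * (r / d)) with hκ
  have hκ0 : 0 < κ := by positivity
  refine ⟨2 * (2 ^ r * (1 + κ * M)), by positivity, ?_⟩
  intro μ _ hmom hmM N Γ a₀ T hN hcard ha₀ hmin hR₀ hT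
  have hN0 : (0 : ℝ) < N := by exact_mod_cast hN
  have hD0 : 0 ≤ distortion r μ Γ :=
    integral_nonneg fun x => Real.rpow_nonneg Metric.infDist_nonneg _
  have hsum := hpack Γ a₀ ha₀ hmin
  have hcard' : (Γ.erase a₀).card = N := by simp [Finset.card_erase_of_mem ha₀, hcard]
  have hhalf := card_le_two_mul_card_filter (Γ.erase a₀)
    (fun a => Metric.infDist a (↑(Γ.erase a) : Set (Euc d)) ^ d * (1 + ‖a‖) ^ (-q))
    (fun a _ => mul_nonneg (pow_nonneg Metric.infDist_nonneg _) (by positivity)) hC hsum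
  rw [hcard'] at hhalf
  set S := (Γ.erase a₀).filter fun a => Metric.infDist a (↑(Γ.erase a) : Set (Euc d)) ^ d *
    (1 + ‖a‖) ^ (-q) ≤ 2 * C / N with hSdef
  set B : Euc d → ℝ := fun a => (2 * C / N * (1 + ‖a‖) ^ q) ^ (r / d) with hBdef
  have hSB : ∀ a ∈ S, Metric.infDist a (↑(Γ.erase a) : Set (Euc d)) ^ r ≤ B a := by
    intro a ha
    have h1 := (Finset.mem_filter.1 ha).2
    have hpos : 0 < (1 + ‖a‖) ^ q := by positivity
    rw [Real.rpow_neg (by positivity), ← div_eq_mul_inv, div_le_iff₀ hpos] at h1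
    have h2 := Real.rpow_le_rpow (pow_nonneg Metric.infDist_nonneg _) h1
      (by positivity : 0 ≤ r / d)
    rwa [← Real.rpow_natCast, ← Real.rpow_mul Metric.infDist_nonneg,
      mul_div_cancel₀ _ hd0.ne'] at h2
  have hpt : ∀ x, ∑ a ∈ S, (Metric.infDist x (↑(Γ.erase a) : Set (Euc d)) ^ r -
      Metric.infDist x (Γ : Set (Euc d)) ^ r) ≤
      2 ^ r * (Metric.infDist x (Γ : Set (Euc d)) ^ r +
        κ * (N : ℝ) ^ (-(r / d)) * (1 + ‖x‖) ^ (q * (r / d))) := by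
    intro x
    obtain ⟨b, -, hbx, hle⟩ := sum_infDist_erase_sub_le (S := S) hr ha₀
      (fun a _ => by positivity) hSB x
    refine hle.trans ?_
    gcongr
    have h1 : 1 + ‖b‖ ≤ (2 + R) * (1 + ‖x‖) := by nlinarith [norm_nonneg x]
    calc B b ≤ (2 * C / N * ((2 + R) * (1 + ‖x‖)) ^ q) ^ (r / d) := by
          simp only [hBdef]; gcongr
      _ = _ := by
          rw [Real.mul_rpow (x := 2 * C / N) (by positivity) (by positivity),
            Real.div_rpow (x := 2 * C) (by positivity) (by positivity),
            ← Real.rpow_mul (by positivity),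
            Real.mul_rpow (x := 2 + R) (by positivity) (by positivity), Real.rpow_neg hN0.le, hκ]
          ring
  have hdist_int := fun s => integrable_infDist_rpow hmom hr s
  have hsub : ∀ a, Integrable (fun x => Metric.infDist x (↑(Γ.erase a) : Set (Euc d)) ^ r -
      Metric.infDist x (Γ : Set (Euc d)) ^ r) μ := fun a => (hdist_int _).sub (hdist_int _)
  have hmint : Integrable (fun x : Euc d => (1 + ‖x‖) ^ (q * (r / d))) μ :=
    integrable_one_add_norm_rpow hmom (by positivity)
  have hcard_mul : S.card * (T - distortion r μ Γ) ≤
      2 ^ r * (distortion r μ Γ + κ * (N : ℝ) ^ (-(r / d)) * M) := by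
    calc S.card * (T - distortion r μ Γ)
        ≤ ∑ a ∈ S, (distortion r μ (Γ.erase a) - distortion r μ Γ) := by
          rw [← nsmul_eq_mul]
          refine Finset.card_nsmul_le_sum _ _ _ fun a ha => ?_
          have := hT a (Finset.mem_of_mem_erase (Finset.mem_filter.1 ha).1)
          linarith
      _ = ∫ x, ∑ a ∈ S, (Metric.infDist x (↑(Γ.erase a) : Set (Euc d)) ^ r -
            Metric.infDist x (Γ : Set (Euc d)) ^ r) ∂μ := by
          rw [integral_finsetSum _ fun a _ => hsub a]
          refine Finset.sum_congr rfl fun a _ => ?_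
          rw [integral_sub (hdist_int _) (hdist_int _)]
          rfl
      _ ≤ ∫ x, 2 ^ r * (Metric.infDist x (Γ : Set (Euc d)) ^ r +
            κ * (N : ℝ) ^ (-(r / d)) * (1 + ‖x‖) ^ (q * (r / d))) ∂μ :=
          integral_mono (integrable_finsetSum _ fun a _ => hsub a)
            (((hdist_int _).add (hmint.const_mul _)).const_mul _) hpt
      _ = 2 ^ r * (distortion r μ Γ +
            κ * (N : ℝ) ^ (-(r / d)) * ∫ x, (1 + ‖x‖) ^ (q * (r / d)) ∂μ) := by
          rw [integral_const_mul, integral_add (hdist_int _) (hmint.const_mul _), integral_const_mul]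
          rfl
      _ ≤ _ := by gcongr
  have hNr : 0 < (N : ℝ) ^ (-(r / d)) := by positivity
  have hfin : 2 ^ r * (distortion r μ Γ + κ * (N : ℝ) ^ (-(r / d)) * M) ≤
      2 ^ r * (1 + κ * M) * (distortion r μ Γ + (N : ℝ) ^ (-(r / d))) := by
    have h0 : 0 ≤ κ * M := by positivity
    have h1 : distortion r μ Γ + κ * (N : ℝ) ^ (-(r / d)) * M ≤
        (1 + κ * M) * (distortion r μ Γ + (N : ℝ) ^ (-(r / d))) := by nlinarith
    rw [mul_assoc (2 ^ r)]
    exact mul_le_mul_of_nonneg_left h1 (by positivity)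
  rcases le_total (T - distortion r μ Γ) 0 with hneg | hpos
  · refine (mul_nonpos_of_nonneg_of_nonpos hN0.le hneg).trans ?_
    positivity
  · calc N * (T - distortion r μ Γ) ≤ 2 * S.card * (T - distortion r μ Γ) := by gcongr
      _ ≤ _ := by linarith

/-- The mismatch bound for laws whose moment of order `r'` is at most one. -/
lemma distortion_mismatch_of_moment_le_one (d : ℕ) (hd : 1 ≤ d) (r r' s : ℝ) (hr : 0 < r)
    (hs : r < s) (hs' : s < d + r) (hr' : s * d / (d + r - s) < r') :
    ∃ K : ℝ, 0 < K ∧ ∀ μ : Measure (Euc d), IsProbabilityMeasure μ →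
      (∀ m : ℝ, 0 < m → Integrable (fun x : Euc d => ‖x‖ ^ m) μ) →
      ∫ x, ‖x‖ ^ r' ∂μ ≤ 1 →
      ∀ Γ : ℕ → Finset (Euc d),
        (∀ N : ℕ, 1 ≤ N → (Γ N).Nonempty ∧ (Γ N).card ≤ N ∧
          ∀ Γ' : Finset (Euc d), Γ'.Nonempty → Γ'.card ≤ N →
            distortion r μ (Γ N) ≤ distortion r μ Γ') →
        ∀ N : ℕ, 1 ≤ N → distortion s μ (Γ N) ≤ K * (N : ℝ) ^ (-(s / d)) := by
  have hd0 : (0 : ℝ) < d := by exact_mod_cast hd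
  have hs0 : 0 < s := hr.trans hs
  have hts : 0 < d + r - s := by linarith
  have hdr' : s * d < r' * (d + r - s) := (div_lt_iff₀ hts).1 hr'
  have hr'0 : 0 < r' := lt_of_le_of_lt (by positivity) hr'
  have hrr' : r ≤ r' := by
    by_contra! h
    nlinarith
  set t := r + d with ht
  have ht0 : 0 < t := by positivity
  set q := r' * (d + r - s) / s with hq
  have hqd : d < q := by rw [hq, lt_div_iff₀ hs0]; linarith
  have hq0 : 0 < q := hd0.trans hqd
  have hqs : q * (s / (t - s)) = r' := by
    have : t - s ≠ 0 := by rw [ht]; linarith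
    have h2 : d + r - s = t - s := by rw [ht]; ring
    rw [hq, h2]
    field_simp
  set M : ℝ := 2 ^ r' * 2 with hM
  have hM0 : 0 < M := by positivity
  set R : ℝ := (2 ^ r * (2 * (2 ^ r' * 2))) ^ (1 / r) with hR
  have hR0 : 0 ≤ R := by positivity
  obtain ⟨C₁, hC₁, hadd⟩ := integral_infDist_rpow_mul_le_gain d hr hR0 hqd
  obtain ⟨C₂, hC₂, hrem⟩ := card_mul_distortion_loss_le d hd hr hR0 hM0.le hqd
  set β := (d : ℝ) / r with hβ
  have hβ0 : 0 < β := by positivity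
  set L := max (M ^ β) (C₁ * M ^ β / β) with hL
  have hL0 : 0 < L := lt_max_of_lt_left (by positivity)
  set C₃ := C₁ * (C₂ * (L ^ (r / d) + 1)) with hC₃
  have hC₃0 : 0 < C₃ := by positivity
  refine ⟨C₃ ^ (s / t) * M ^ ((t - s) / t), by positivity, ?_⟩
  intro μ _ hmom hμ Γ hΓ N hN
  set u : ℕ → ℝ := fun N => distortion r μ (Γ N) with hu
  set A : ℕ → ℝ := fun N =>
    ∫ x, Metric.infDist x (Γ N : Set (Euc d)) ^ t * (1 + ‖x‖) ^ (-q) ∂μ with hA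
  have hu0 : ∀ N, 0 ≤ u N := fun N =>
    integral_nonneg fun x => Real.rpow_nonneg Metric.infDist_nonneg _
  have hA0 : ∀ N, 0 ≤ A N := fun N => integral_nonneg fun x =>
    mul_nonneg (Real.rpow_nonneg Metric.infDist_nonneg _) (by positivity)
  have hsingle : ∀ N, 1 ≤ N → u N ≤ distortion r μ {0} := fun N hN =>
    (hΓ N hN).2.2 {0} (Finset.singleton_nonempty 0) (by simpa using hN)
  have hnear : ∀ N, 1 ≤ N → ∃ a₀ ∈ Γ N, (∀ a ∈ Γ N, ‖a₀‖ ≤ ‖a‖) ∧ ‖a₀‖ ≤ R := fun N hN => by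
    obtain ⟨a₀, ha₀, hmin⟩ := Finset.exists_min_image (Γ N) (fun a => ‖a‖) (hΓ N hN).1
    exact ⟨a₀, ha₀, hmin, norm_rpow_le_of_distortion_le hmom hr hrr' hμ ha₀ hmin (hsingle N hN)⟩
  have hgain : ∀ N, 1 ≤ N → A N ≤ C₁ * (u N - u (N + 1)) := fun N hN => by
    obtain ⟨a₀, ha₀, -, hR₀⟩ := hnear N hN
    refine hadd μ inferInstance hmom (Γ N) a₀ (u (N + 1)) ha₀ hR₀ fun y => ?_
    refine (hΓ (N + 1) (by omega)).2.2 _ (Finset.insert_nonempty _ _) ?_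
    exact (Finset.card_insert_le _ _).trans (by have := (hΓ N hN).2.1; omega)
  have hholder : ∀ p, 0 < p → p ≤ s → ∀ N,
      distortion p μ (Γ N) ≤ A N ^ (p / t) * M ^ ((t - p) / t) := by
    intro p hp hps N
    have hpt : p < t := by linarith
    have hexp : q * (p / (t - p)) ≤ r' := by
      rw [← hqs]
      have h1 : 0 < t - s := by linarith
      gcongr
    have hexp0 : 0 < q * (p / (t - p)) := mul_pos hq0 (div_pos hp (by linarith))
    have hWeq : (fun x : Euc d => ((1 + ‖x‖) ^ q) ^ (p / (t - p))) =
        fun x => (1 + ‖x‖) ^ (q * (p / (t - p))) := by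
      funext x
      rw [Real.rpow_mul (by positivity)]
    have hFeq : (fun x : Euc d => Metric.infDist x (Γ N : Set (Euc d)) ^ t *
        ((1 + ‖x‖) ^ q)⁻¹) =
        fun x => Metric.infDist x (Γ N : Set (Euc d)) ^ t * (1 + ‖x‖) ^ (-q) := by
      funext x
      rw [Real.rpow_neg (by positivity)]
    have hdm : Measurable fun x : Euc d => Metric.infDist x (Γ N : Set (Euc d)) :=
      (Metric.continuous_infDist_pt _).measurable
    have h := integral_rpow_le_weighted (μ := μ)
      (f := fun x => Metric.infDist x (Γ N : Set (Euc d))) (w := fun x => (1 + ‖x‖) ^ q)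
      hp hpt (fun x => Metric.infDist_nonneg) (fun x => by positivity) hdm (by fun_prop) ?_ ?_
    · rw [hWeq, hFeq] at h
      refine h.trans ?_
      have := hA0 N
      have h2 : 0 ≤ (t - p) / t := div_nonneg (by linarith) ht0.le
      gcongr
      exact integral_one_add_norm_rpow_le hmom hexp0 hexp hμ
    · rw [hFeq]
      refine (integrable_infDist_rpow hmom ht0 (Γ N : Set (Euc d))).mono'
        (Measurable.aestronglyMeasurable (by fun_prop)) (Filter.Eventually.of_forall fun x => ?_)
      have h0 := Real.rpow_nonneg (Metric.infDist_nonneg (x := x) (s := (Γ N : Set (Euc d)))) t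
      rw [Real.norm_of_nonneg (mul_nonneg h0 (by positivity))]
      exact mul_le_of_le_one_right h0
        (Real.rpow_le_one_of_one_le_of_nonpos (by linarith [norm_nonneg x]) (by linarith))
    · rw [hWeq]
      exact integrable_one_add_norm_rpow hmom hexp0
  have hrec : ∀ N, 1 ≤ N → u N ^ (1 + β) ≤ C₁ * M ^ β * (u N - u (N + 1)) := by
    intro N hN
    have h1 := Real.rpow_le_rpow (hu0 N) (hholder r hr hs.le N) (by positivity : 0 ≤ 1 + β)
    have e1 : r / t * (1 + β) = 1 := by rw [hβ, ht]; field_simp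
    have e2 : (t - r) / t * (1 + β) = β := by rw [hβ, ht]; field_simp; ring
    rw [Real.mul_rpow (Real.rpow_nonneg (hA0 N) _) (by positivity), ← Real.rpow_mul (hA0 N),
      ← Real.rpow_mul hM0.le, e1, e2, Real.rpow_one] at h1
    refine h1.trans ?_
    have := mul_le_mul_of_nonneg_right (hgain N hN) (by positivity : 0 ≤ M ^ β)
    linarith
  have hu1 : u 1 ≤ M := by
    refine (hsingle 1 le_rfl).trans ?_
    have h0 : distortion r μ {0} = ∫ x, ‖x‖ ^ r ∂μ := by simp [distortion]
    rw [h0]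
    refine le_trans (integral_mono (hmom r hr) (integrable_one_add_norm_rpow hmom hr) fun x => ?_)
      (integral_one_add_norm_rpow_le hmom hr hrr' hμ)
    exact Real.rpow_le_rpow (norm_nonneg x) (by linarith) hr.le
  have hN0 : (0 : ℝ) < N := by exact_mod_cast hN
  have hdecay : u N ≤ L ^ (r / d) * (N : ℝ) ^ (-(r / d)) := by
    have h1 := rpow_recursion_decay hβ0 (by positivity) hM0 (fun N _ => hu0 N) hu1 hrec N hN
    have h2 := Real.rpow_le_rpow (Real.rpow_nonneg (hu0 N) _) h1 (by positivity : 0 ≤ r / d)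
    have e1 : β * (r / d) = 1 := by rw [hβ]; field_simp
    rwa [← Real.rpow_mul (hu0 N), e1, Real.rpow_one, Real.div_rpow hL0.le hN0.le,
      div_eq_mul_inv, ← Real.rpow_neg hN0.le] at h2
  have hmono : u (N + 1) ≤ u N := by
    have := hgain N hN
    have := hA0 N
    by_contra! hlt
    nlinarith
  have hloss : N * (u N - u (N + 1)) ≤ C₂ * (L ^ (r / d) + 1) * (N : ℝ) ^ (-(r / d)) := by
    have hrhs : 0 ≤ C₂ * (L ^ (r / d) + 1) * (N : ℝ) ^ (-(r / d)) := by positivity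
    obtain ⟨hne, hcard, -⟩ := hΓ (N + 1) (by omega)
    rcases hcard.lt_or_eq with hlt | heq
    · have := (hΓ N hN).2.2 _ hne (by omega)
      refine le_trans (mul_nonpos_of_nonneg_of_nonpos hN0.le ?_) hrhs
      change distortion r μ (Γ N) - distortion r μ (Γ (N + 1)) ≤ 0
      linarith
    · obtain ⟨a₀, ha₀, hmin, hR₀⟩ := hnear (N + 1) (by omega)
      have hexp : q * (r / d) ≤ r' := by
        rw [← hqs]
        have h1 : 0 < t - s := by linarith
        have h2 : t - s ≤ d := by linarith
        gcongr
      have hMint := integral_one_add_norm_rpow_le hmom (by positivity : 0 < q * (r / d)) hexp hμ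
      have h := hrem μ inferInstance hmom hMint N (Γ (N + 1)) a₀ (u N) hN heq ha₀ hmin hR₀
        fun a ha => by
          have hc : ((Γ (N + 1)).erase a).card = N := by simp [Finset.card_erase_of_mem ha, heq]
          exact (hΓ N hN).2.2 _ (Finset.card_pos.1 (by omega)) hc.le
      refine h.trans ?_
      rw [mul_assoc]
      have : distortion r μ (Γ (N + 1)) ≤ L ^ (r / d) * (N : ℝ) ^ (-(r / d)) := hmono.trans hdecay
      gcongr
      linarith
  have hAN : A N ≤ C₃ * (N : ℝ) ^ (-(t / d)) := by
    have e1 : -(t / d) = -(r / d) + -1 := by rw [ht]; field_simp; ring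
    rw [e1, Real.rpow_add hN0, Real.rpow_neg_one, ← mul_assoc, ← div_eq_mul_inv,
      le_div_iff₀ hN0]
    calc A N * N ≤ C₁ * (u N - u (N + 1)) * N := by gcongr; exact hgain N hN
      _ = C₁ * (N * (u N - u (N + 1))) := by ring
      _ ≤ C₁ * (C₂ * (L ^ (r / d) + 1) * (N : ℝ) ^ (-(r / d))) := by gcongr
      _ = _ := by rw [hC₃]; ring
  calc distortion s μ (Γ N) ≤ A N ^ (s / t) * M ^ ((t - s) / t) := hholder s hs0 le_rfl N
    _ ≤ (C₃ * (N : ℝ) ^ (-(t / d))) ^ (s / t) * M ^ ((t - s) / t) := by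
        have := hA0 N
        gcongr
    _ = _ := by
        have e1 : -(t / d) * (s / t) = -(s / d) := by field_simp
        rw [Real.mul_rpow hC₃0.le (by positivity), ← Real.rpow_mul hN0.le, e1]
        ring

open scoped Pointwise in
lemma infDist_inv_smul_sub {d : ℕ} {m : ℝ} (hm : 0 < m) (a x : Euc d) (Γ : Finset (Euc d)) :
    Metric.infDist (m⁻¹ • (x - a)) (↑(Γ.image fun y => m⁻¹ • (y - a)) : Set (Euc d)) =
      m⁻¹ * Metric.infDist x (Γ : Set (Euc d)) := by
  have h1 : (↑(Γ.image fun y => m⁻¹ • (y - a)) : Set (Euc d)) =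
      m⁻¹ • ((fun y => y - a) '' (Γ : Set (Euc d))) := by
    rw [Finset.coe_image, ← Set.image_smul, Set.image_image]
  rw [h1, infDist_smul₀ (inv_ne_zero hm.ne'), Real.norm_of_nonneg (by positivity),
    Metric.infDist_image (Φ := fun y : Euc d => y - a)
      (IsometryEquiv.subRight a).isometry]

lemma distortion_map_inv_smul_sub {d : ℕ} {Ω : Type*} [MeasurableSpace Ω] {P : Measure Ω}
    {X : Ω → Euc d} (hX : Measurable X) {m p : ℝ} (hm : 0 < m) (hp : 0 < p) (a : Euc d)
    (Γ : Finset (Euc d)) :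
    distortion p (P.map fun ω => m⁻¹ • (X ω - a)) (Γ.image fun y => m⁻¹ • (y - a)) =
      (m ^ p)⁻¹ * ∫ ω, Metric.infDist (X ω) (Γ : Set (Euc d)) ^ p ∂P := by
  rw [distortion, integral_map (by fun_prop)
    ((Metric.continuous_infDist_pt _).rpow_const fun x => Or.inr hp.le).aestronglyMeasurable,
    ← integral_const_mul]
  congr 1
  funext ω
  rw [infDist_inv_smul_sub hm, Real.mul_rpow (by positivity) Metric.infDist_nonneg,
    Real.inv_rpow hm.le]

lemma integrable_norm_sub_rpow {d : ℕ} {Ω : Type*} [MeasurableSpace Ω] {P : Measure Ω}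
    [IsProbabilityMeasure P] {X : Ω → Euc d} (hX : Measurable X) {p : ℝ} (hp : 0 < p)
    (hmom : Integrable (fun ω => ‖X ω‖ ^ p) P) (a : Euc d) :
    Integrable (fun ω => ‖X ω - a‖ ^ p) P := by
  refine ((hmom.add (integrable_const (‖a‖ ^ p))).const_mul (2 ^ p)).mono'
    (Measurable.aestronglyMeasurable (by fun_prop)) (Filter.Eventually.of_forall fun ω => ?_)
  rw [Real.norm_of_nonneg (by positivity)]
  exact (Real.rpow_le_rpow (norm_nonneg _) (norm_sub_le _ _) hp.le).trans
    (add_rpow_le_two_rpow_mul (norm_nonneg _) (norm_nonneg _) hp.le)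

lemma integral_norm_sub_rpow_pos {d : ℕ} (hd : 1 ≤ d) {Ω : Type*} [MeasurableSpace Ω]
    {P : Measure Ω} [IsProbabilityMeasure P] {X : Ω → Euc d} (hX : Measurable X) {p : ℝ}
    (hp : 0 < p) (hmom : Integrable (fun ω => ‖X ω‖ ^ p) P)
    (hsing : ¬ (P.map X).MutuallySingular (volume : Measure (Euc d))) (a : Euc d) :
    0 < ∫ ω, ‖X ω - a‖ ^ p ∂P := by
  have h0 : 0 ≤ ∫ ω, ‖X ω - a‖ ^ p ∂P := integral_nonneg fun ω => by positivity
  refine h0.lt_of_ne fun h => hsing ?_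
  have : Nontrivial (Euc d) :=
    Module.nontrivial_of_finrank_pos (R := ℝ) (by rw [finrank_euclideanSpace_fin]; omega)
  rw [eq_comm, integral_eq_zero_iff_of_nonneg (fun ω => by positivity)
    (integrable_norm_sub_rpow hX hp hmom a)] at h
  refine ⟨{a}ᶜ, (measurableSet_singleton a).compl, ?_, by simp⟩
  rw [Measure.map_apply hX (measurableSet_singleton a).compl]
  refine measure_mono_null ?_ (ae_iff.1 h)
  intro ω hω
  have hne : X ω ≠ a := hω
  have : 0 < ‖X ω - a‖ := norm_pos_iff.2 (sub_ne_zero.2 hne)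
  exact (Real.rpow_pos_of_pos this p).ne'

lemma integral_infDist_rpow_le_of_quantErrRV_eq {d : ℕ} {Ω : Type*} [MeasurableSpace Ω]
    {P : Measure Ω} {X : Ω → Euc d} {p : ℝ} (hp : 0 < p) {N : ℕ} {Γ Γ' : Finset (Euc d)}
    (h : quantErrRV p P X Γ = optQuantErrRV p N P X) (hne : Γ'.Nonempty) (hcard : Γ'.card ≤ N) :
    ∫ ω, Metric.infDist (X ω) (Γ : Set (Euc d)) ^ p ∂P ≤
      ∫ ω, Metric.infDist (X ω) (Γ' : Set (Euc d)) ^ p ∂P := by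
  have hnn : ∀ Γ : Finset (Euc d), 0 ≤ ∫ ω, Metric.infDist (X ω) (Γ : Set (Euc d)) ^ p ∂P :=
    fun Γ => integral_nonneg fun ω => Real.rpow_nonneg Metric.infDist_nonneg _
  have hle : quantErrRV p P X Γ ≤ quantErrRV p P X Γ' := by
    rw [h]
    refine csInf_le ⟨0, ?_⟩ ⟨Γ', hne, hcard, rfl⟩
    rintro e ⟨Γ'', -, -, rfl⟩
    exact Real.rpow_nonneg (hnn Γ'') _
  exact (Real.rpow_le_rpow_iff (hnn Γ) (hnn Γ') (by positivity)).1 hle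

/-- **Distortion mismatch, all-moments version.** Let `r > 0` and `X` an ℝ^d-valued random
vector with finite moments of every order, whose law has a non-zero absolutely continuous
component w.r.t. Lebesgue measure.  Let `(Γ_N)` be a sequence of `L^r`-optimal quantizers of
`X`.  Then for every `s ∈ (r, d+r)` and every `r' > sd/(d+r−s)` there is a finite constant
`K̃_{d,r,r',s}` (depending only on `d, r, r', s`) with
`e_s(Γ_N, X) ≤ K̃ · σ_{r'}(X) · N^{−1/d}` for all `N ≥ 1`. -/
theorem distortion_mismatch_all_moments (d : ℕ) (hd : 1 ≤ d) (r r' s : ℝ) (hr : 0 < r)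
    (hs : r < s) (hs' : s < d + r) (hr' : s * d / (d + r - s) < r') :
    ∃ K : ℝ, ∀ (Ω : Type) (_ : MeasurableSpace Ω) (P : Measure Ω), IsProbabilityMeasure P →
      ∀ X : Ω → Euc d, Measurable X →
        (∀ m : ℝ, 0 < m → Integrable (fun ω => ‖X ω‖ ^ m) P) →
        ¬ (P.map X).MutuallySingular (volume : Measure (Euc d)) →
        ∀ Γ : ℕ → Finset (Euc d),
          (∀ N : ℕ, 1 ≤ N → (Γ N).Nonempty ∧ (Γ N).card ≤ N ∧
            quantErrRV r P X (Γ N) = optQuantErrRV r N P X) →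
          ∀ N : ℕ, 1 ≤ N →
            quantErrRV s P X (Γ N) ≤ K * sigmaRV r' P X * (N : ℝ) ^ (-(1 / (d : ℝ))) := by
  obtain ⟨K, hK, hmain⟩ := distortion_mismatch_of_moment_le_one d hd r r' s hr hs hs' hr'
  refine ⟨K ^ (1 / s), ?_⟩
  intro Ω _ P _ X hX hmom hsing Γ hΓ N hN
  have hs0 : 0 < s := hr.trans hs
  have hr'0 : 0 < r' :=
    lt_of_le_of_lt (div_nonneg (by positivity) (by linarith)) hr'
  have hN0 : (0 : ℝ) < N := by exact_mod_cast hN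
  rw [sigmaRV, Real.mul_iInf_of_nonneg (by positivity), Real.iInf_mul_of_nonneg (by positivity)]
  refine le_ciInf fun a => ?_
  set I := ∫ ω, ‖X ω - a‖ ^ r' ∂P with hI
  have hIpos : 0 < I := integral_norm_sub_rpow_pos hd hX hr'0 (hmom r' hr'0) hsing a
  set m := I ^ (1 / r') with hm
  have hmpos : 0 < m := by positivity
  have hmI : m ^ r' = I := by
    rw [hm, ← Real.rpow_mul hIpos.le, one_div_mul_cancel hr'0.ne', Real.rpow_one]
  have hY : Measurable fun ω => m⁻¹ • (X ω - a) := by fun_prop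
  set μ := P.map fun ω => m⁻¹ • (X ω - a) with hμ
  have hprob : IsProbabilityMeasure μ := Measure.isProbabilityMeasure_map hY.aemeasurable
  have hnorm : ∀ (p : ℝ) ω, ‖m⁻¹ • (X ω - a)‖ ^ p = (m ^ p)⁻¹ * ‖X ω - a‖ ^ p := fun p ω => by
    rw [norm_smul, Real.norm_of_nonneg (by positivity),
      Real.mul_rpow (by positivity) (norm_nonneg _), Real.inv_rpow hmpos.le]
  have hmomμ : ∀ p : ℝ, 0 < p → Integrable (fun x : Euc d => ‖x‖ ^ p) μ := fun p hp => by
    rw [hμ, integrable_map_measure (Measurable.aestronglyMeasurable (by fun_prop))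
      hY.aemeasurable]
    simp only [Function.comp_def, hnorm]
    exact (integrable_norm_sub_rpow hX hp (hmom p hp) a).const_mul _
  have hone : ∫ x, ‖x‖ ^ r' ∂μ ≤ 1 := by
    rw [hμ, integral_map hY.aemeasurable (Measurable.aestronglyMeasurable (by fun_prop))]
    simp only [hnorm]
    rw [integral_const_mul, hmI, inv_mul_cancel₀ hIpos.ne']
  have hfin := hmain μ hprob hmomμ hone (fun N => (Γ N).image fun y => m⁻¹ • (y - a)) ?_ N hN
  · rw [distortion_map_inv_smul_sub hX hmpos hs0, inv_mul_le_iff₀ (by positivity)] at hfin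
    have hnn : 0 ≤ ∫ ω, Metric.infDist (X ω) (Γ N : Set (Euc d)) ^ s ∂P :=
      integral_nonneg fun ω => Real.rpow_nonneg Metric.infDist_nonneg _
    refine (Real.rpow_le_rpow hnn hfin (by positivity : 0 ≤ 1 / s)).trans_eq ?_
    have e1 : -(s / d) * (1 / s) = -(1 / (d : ℝ)) := by field_simp
    rw [Real.mul_rpow (by positivity) (by positivity), Real.mul_rpow hK.le (by positivity),
      ← Real.rpow_mul hmpos.le, ← Real.rpow_mul hN0.le, e1, mul_one_div_cancel hs0.ne',
      Real.rpow_one]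
    ring
  · intro n hn
    obtain ⟨hne, hcard, hopt⟩ := hΓ n hn
    refine ⟨hne.image _, Finset.card_image_le.trans hcard, fun Γ' hne' hcard' => ?_⟩
    have himage : Γ' = (Γ'.image fun y => m • y + a).image fun y => m⁻¹ • (y - a) := by
      rw [Finset.image_image]
      simp [Function.comp_def, smul_smul, inv_mul_cancel₀ hmpos.ne']
    rw [himage, distortion_map_inv_smul_sub hX hmpos hr, distortion_map_inv_smul_sub hX hmpos hr]
    refine mul_le_mul_of_nonneg_left ?_ (by positivity)
    exact integral_infDist_rpow_le_of_quantErrRV_eq hr hopt (hne'.image _)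
      (Finset.card_image_le.trans hcard')
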